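/- Let m₀ ∈ L^∞(𝕋) be non-singular with R_{m₀}1 = 1 and let (H, U, π, φ) be the associated wavelet representation. Then there is a standard measure space (A, 𝓜, μ), a measurable field {𝓗_a} of Hilbert spaces over A, a measurable field {π_a} of irreducible representations of BS(1,N), and a unitary Ψ : H → ∫^⊕ 𝓗_a dμ(a) such that Ψπ(x)Ψ⁻¹ = ∫^⊕ π_a(x) dμ(a) for all x ∈ BS(1,N) and Ψπ'Ψ⁻¹ is the algebra of diagonal operators. For almost every a ∈ A there exists a unique ergodic, quasi-invariant probability measure ν_a on S_N with d(ν_a∘S)/dν_a = |m₀|², and with θ = m₀/|m₀| the representation π_a is unitarily equivalent to π_{ν_a,θ}. Moreover, for every f ∈ C(S_N), ∫_{S_N} f dm = ∫_A ∫_{S_N} f dν_a dμ(a), where m is the measure on S_N associated to m₀. -/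

import Mathlib

noncomputable section

open MeasureTheory Real Complex Filter Finset
open scoped ENNReal

/-! ### Basic instances for the circle -/

instance : MeasurableSpace Circle := borel Circle
instance : BorelSpace Circle := ⟨rfl⟩

/-- The point `e^{-2πit}` of the unit circle. -/
def ee (t : ℝ) : Circle := Circle.exp (-(2 * π * t))

/-- Normalized Lebesgue measure on the circle, realized as the image of Lebesgue
measure on `[0,1)` under `t ↦ e^{-2πit}`. -/
def circleMeasure : Measure Circle := (volume.restrict (Set.Ico (0:ℝ) 1)).map ee

/-! ### The Baumslag–Solitar group `BS(1,N)` -/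

/-- The single relation `u t u⁻¹ (t^N)⁻¹` defining `BS(1,N)`. -/
def BSRel (N : ℕ) : Set (FreeGroup Bool) :=
  {FreeGroup.of true * FreeGroup.of false * (FreeGroup.of true)⁻¹ * ((FreeGroup.of false) ^ N)⁻¹}

/-- The Baumslag–Solitar group `BS(1,N) = ⟨u,t | u t u⁻¹ = t^N⟩`. -/
abbrev BS (N : ℕ) := PresentedGroup (BSRel N)

/-- The generator `u` of `BS(1,N)`. -/
def BS.u (N : ℕ) : BS N := PresentedGroup.of true

/-- The generator `t` of `BS(1,N)`. -/
def BS.t (N : ℕ) : BS N := PresentedGroup.of false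

/-! ### The solenoid -/

/-- The `N`-solenoid, as a subgroup of the product of circles indexed by `ℤ`:
all sequences `(z_n)` with `z_{n+1}^N = z_n`. -/
def solenoidGroup (N : ℕ) : Subgroup (ℤ → Circle) where
  carrier := {z | ∀ n : ℤ, z (n + 1) ^ N = z n}
  one_mem' := by intro n; simp
  mul_mem' := by
    intro a b ha hb n
    simp only [Set.mem_setOf_eq, Pi.mul_apply, mul_pow] at *
    rw [ha n, hb n]
  inv_mem' := by
    intro a ha n
    simp only [Set.mem_setOf_eq, Pi.inv_apply, inv_pow] at *
    rw [ha n]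

/-- The `N`-solenoid as a type. -/
abbrev Solenoid (N : ℕ) := ↥(solenoidGroup N)

/-- The shift `S` on the solenoid: `(S z)_n = z_{n-1}`. -/
def shift (N : ℕ) (z : Solenoid N) : Solenoid N :=
  ⟨fun n => z.val (n - 1), by
    intro n
    have h := z.property (n - 1)
    simpa using h⟩

/-- The inverse `S⁻¹` of the shift on the solenoid: `(S⁻¹ z)_n = z_{n+1}`. -/
def shiftInv (N : ℕ) (z : Solenoid N) : Solenoid N :=
  ⟨fun n => z.val (n + 1), fun n => z.property (n + 1)⟩

/-- Integer powers `Sⁿ` of the shift. -/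
def shiftZ (N : ℕ) (n : ℤ) : Solenoid N → Solenoid N :=
  if 0 ≤ n then (shift N)^[n.toNat] else (shiftInv N)^[(-n).toNat]

/-- The measure `ν ∘ S`, defined by `(ν ∘ S)(E) = ν(S(E))`. -/
def measShift (N : ℕ) (ν : Measure (Solenoid N)) : Measure (Solenoid N) :=
  ν.map (shiftInv N)

/-- `ν` is quasi-invariant for the shift `S`: `ν ∘ S` and `ν` are mutually
absolutely continuous. -/
def QuasiInvariant (N : ℕ) (ν : Measure (Solenoid N)) : Prop :=
  measShift N ν ≪ ν ∧ ν ≪ measShift N ν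

/-- The shift `S` is ergodic with respect to `ν`. -/
def ShiftErgodic (N : ℕ) (ν : Measure (Solenoid N)) : Prop :=
  ∀ E : Set (Solenoid N), MeasurableSet E → shift N ⁻¹' E = E → ν E = 0 ∨ ν Eᶜ = 0

/-- A bounded measurable (`L^∞`-type) function. -/
def BddMeasurable {α : Type*} [MeasurableSpace α] (f : α → ℂ) : Prop :=
  Measurable f ∧ ∃ C : ℝ, ∀ x, ‖f x‖ ≤ C

/-! ### The representation `π_{ν,θ}` -/

/-- The pair of unitaries `U, T` on `L²(ν)` given by
`Uξ = √Δ ⬝ θ ⬝ (ξ∘S)` (with `Δ = d(ν∘S)/dν`) and `(Tξ)(z) = z₀ ξ(z)`. -/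
def IsPiNuTheta (N : ℕ) (ν : Measure (Solenoid N)) (θ : Solenoid N → Circle)
    (U T : unitary (Lp ℂ 2 ν →L[ℂ] Lp ℂ 2 ν)) : Prop :=
  (∀ ξ : Lp ℂ 2 ν,
      (((U : Lp ℂ 2 ν →L[ℂ] Lp ℂ 2 ν) ξ : Lp ℂ 2 ν) : Solenoid N → ℂ) =ᵐ[ν]
        fun z => (Real.sqrt (((measShift N ν).rnDeriv ν z).toReal) : ℂ) * (θ z : ℂ) *
          (ξ : Solenoid N → ℂ) (shift N z)) ∧
  (∀ ξ : Lp ℂ 2 ν,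
      (((T : Lp ℂ 2 ν →L[ℂ] Lp ℂ 2 ν) ξ : Lp ℂ 2 ν) : Solenoid N → ℂ) =ᵐ[ν]
        fun z => ((z.val 0 : Circle) : ℂ) * (ξ : Solenoid N → ℂ) z)

/-- `φ` is a cyclic vector for the (unitary) representation generated by `U` and `T`:
the only closed subspace containing `φ` and invariant under the group generated by
`U` and `T` is the whole space. -/
def cyclicVector {H : Type*} [NormedAddCommGroup H] [InnerProductSpace ℂ H]
    [CompleteSpace H] (U T : unitary (H →L[ℂ] H)) (φ : H) : Prop :=
  ∀ K : Submodule ℂ H, IsClosed (K : Set H) → φ ∈ K →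
    (∀ g ∈ Subgroup.closure ({U, T} : Set (unitary (H →L[ℂ] H))),
      ∀ v ∈ K, (g : H →L[ℂ] H) v ∈ K) → K = ⊤

/-! ### Filters and the Ruelle operator -/

/-- The quadrature mirror filter condition `R_{m₀} 1 = 1`, written out on `[0,1)`:
`(1/N) ∑_{k<N} |m₀(e^{-2πi(x+k)/N})|² = 1` for a.e. `x`. -/
def QMF (N : ℕ) (m₀ : Circle → ℂ) : Prop :=
  ∀ᵐ x ∂(volume.restrict (Set.Ico (0:ℝ) 1)),
    (1 / N : ℝ) * ∑ k ∈ Finset.range N, ‖m₀ (ee ((x + k) / N))‖ ^ 2 = 1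

/-- `h` is a fixed point of the Ruelle operator `R_{m₀}`:
`(1/N) ∑_{w^N = z} |m₀(w)|² h(w) = h(z)` for a.e. `z`, written out on `[0,1)`. -/
def RuelleFixed (N : ℕ) (m₀ : Circle → ℂ) (h : Circle → ℂ) : Prop :=
  ∀ᵐ x ∂(volume.restrict (Set.Ico (0:ℝ) 1)),
    (1 / N : ℂ) * ∑ k ∈ Finset.range N,
        (‖m₀ (ee ((x + k) / N))‖ ^ 2 : ℝ) * h (ee ((x + k) / N)) = h (ee x)

/-- The wavelet representation of `BS(1,N)` associated to a filter `m₀`, realized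
on `L²(m)` for a measure `m` on the solenoid: `Uξ = m₀ ⬝ (ξ∘S)` and `T` is
multiplication by the coordinate `z₀`. -/
def IsWaveletRepOn (N : ℕ) (m₀ : Circle → ℂ) (m : Measure (Solenoid N))
    (U T : unitary (Lp ℂ 2 m →L[ℂ] Lp ℂ 2 m)) : Prop :=
  (∀ ξ : Lp ℂ 2 m,
      (((U : Lp ℂ 2 m →L[ℂ] Lp ℂ 2 m) ξ : Lp ℂ 2 m) : Solenoid N → ℂ) =ᵐ[m]
        fun z => m₀ (z.val 0) * (ξ : Solenoid N → ℂ) (shift N z)) ∧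
  (∀ ξ : Lp ℂ 2 m,
      (((T : Lp ℂ 2 m →L[ℂ] Lp ℂ 2 m) ξ : Lp ℂ 2 m) : Solenoid N → ℂ) =ᵐ[m]
        fun z => ((z.val 0 : Circle) : ℂ) * (ξ : Solenoid N → ℂ) z)

/-- The measure `m` on the solenoid associated to a weight `W` (with `N W = |m₀|²`):
its `z₀`-marginal is normalized Lebesgue measure on the circle, and
`d(m∘S)/dm = N W`. -/
def IsAssociatedMeasure (N : ℕ) (W : Circle → ℝ) (m : Measure (Solenoid N)) : Prop :=
  IsProbabilityMeasure m ∧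
  m.map (fun z : Solenoid N => z.val 0) = circleMeasure ∧
  measShift N m = m.withDensity (fun z => ENNReal.ofReal (N * W (z.val 0)))

end

noncomputable section

/-- A standard Borel base space for a direct integral decomposition. -/
structure MeasurableBase where
  A : Type
  [mA : MeasurableSpace A]
  [sb : StandardBorelSpace A]

attribute [instance] MeasurableBase.mA MeasurableBase.sb

open MeasureTheory Real Complex Filter Finset in
/-- The data of the direct integral decomposition
`Ψ : L²(m) → ∫^⊕ 𝓗_a dμ(a) = L²(∫ ν_a dμ(a))` of the wavelet representation
associated to `m₀` into irreducible representations: a measure `μ` on a standard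
Borel space `A`; a measurable family `a ↦ ν_a = κ a` of ergodic quasi-invariant
probability measures on the solenoid with `d(ν_a∘S)/dν_a = |m₀|²` decomposing
`m`, each `ν_a` unique with these properties up to equivalence of the associated
representations `π_a ≅ π_{ν_a,θ}` (`θ = m₀/|m₀|`); the direct integral realized
as `L²(ρ)` with `ρ(E × F) = ∫_E ν_a(F) dμ(a)`; and a unitary `Ψ` intertwining
`U, T` with the decomposed operators and carrying the commutant onto the algebra
of diagonal operators. -/
structure DirectIntegralDecomp (N : ℕ) (m₀ : Circle → ℂ) (m : Measure (Solenoid N))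
    (U T : unitary (Lp ℂ 2 m →L[ℂ] Lp ℂ 2 m)) (B : MeasurableBase) where
  μ : Measure B.A
  sf : SigmaFinite μ
  κ : B.A → Measure (Solenoid N)
  ρm : Measure (B.A × Solenoid N)
  -- measurability of the field `a ↦ ν_a`
  κ_meas : ∀ E : Set (Solenoid N), MeasurableSet E → Measurable fun a => κ a E
  -- for a.e. `a`, `ν_a` is a probability measure, quasi-invariant with
  -- `d(ν_a∘S)/dν_a = |m₀|²`, and ergodic (so that `π_{ν_a,θ}` is irreducible)
  κ_prob : ∀ᵐ a ∂μ, IsProbabilityMeasure (κ a)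
  κ_rn : ∀ᵐ a ∂μ, measShift N (κ a)
    = (κ a).withDensity (fun z => ENNReal.ofReal (‖m₀ (z.val 0)‖ ^ 2))
  κ_qi : ∀ᵐ a ∂μ, QuasiInvariant N (κ a)
  κ_erg : ∀ᵐ a ∂μ, ShiftErgodic N (κ a)
  -- uniqueness of `ν_a`: any ergodic quasi-invariant probability measure with
  -- the same Radon–Nikodym derivative and unitarily equivalent representation
  -- (`Uξ = m₀·(ξ∘S)`, `T = M_{z₀}`, i.e. `π_{ν,θ}` with `θ = m₀/|m₀|`)
  -- coincides with `ν_a`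
  κ_unique : ∀ᵐ a ∂μ, ∀ ν : Measure (Solenoid N), IsProbabilityMeasure ν →
    measShift N ν = ν.withDensity (fun z => ENNReal.ofReal (‖m₀ (z.val 0)‖ ^ 2)) →
    ShiftErgodic N ν →
    (∃ (Uv Tv : unitary (Lp ℂ 2 ν →L[ℂ] Lp ℂ 2 ν))
       (Ua Ta : unitary (Lp ℂ 2 (κ a) →L[ℂ] Lp ℂ 2 (κ a))),
      IsWaveletRepOn N m₀ ν Uv Tv ∧ IsWaveletRepOn N m₀ (κ a) Ua Ta ∧
      ∃ W : Lp ℂ 2 ν ≃ₗᵢ[ℂ] Lp ℂ 2 (κ a),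
        (∀ ξ : Lp ℂ 2 ν,
          W ((Uv : Lp ℂ 2 ν →L[ℂ] Lp ℂ 2 ν) ξ) = (Ua : Lp ℂ 2 (κ a) →L[ℂ] Lp ℂ 2 (κ a)) (W ξ)) ∧
        (∀ ξ : Lp ℂ 2 ν,
          W ((Tv : Lp ℂ 2 ν →L[ℂ] Lp ℂ 2 ν) ξ) = (Ta : Lp ℂ 2 (κ a) →L[ℂ] Lp ℂ 2 (κ a)) (W ξ))) →
    ν = κ a
  -- the decomposition of the measure: `m = ∫ ν_a dμ(a)`, i.e.
  -- `∫ f dm = ∫_A ∫_{S_N} f dν_a dμ(a)`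
  κ_mix : ∀ E : Set (Solenoid N), MeasurableSet E → m E = ∫⁻ a, κ a E ∂μ
  -- the direct integral `∫^⊕ 𝓗_a dμ(a)`, realized as `L²(ρ)` for the measure
  -- `ρ(E × F) = ∫_E ν_a(F) dμ(a)` on `A × S_N`
  ρ_prod : ∀ (E : Set B.A) (F : Set (Solenoid N)), MeasurableSet E → MeasurableSet F →
    ρm (E ×ˢ F) = ∫⁻ a in E, κ a F ∂μ
  -- the unitary `Ψ : H → ∫^⊕ 𝓗_a dμ(a)`
  Ψ : Lp ℂ 2 m ≃ₗᵢ[ℂ] Lp ℂ 2 ρm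
  -- `Ψ π(x) Ψ⁻¹ = ∫^⊕ π_a(x) dμ(a)`: `Ψ` intertwines `U`, `T` with the fields of
  -- operators acting fiberwise by `(U_a ξ)(z) = m₀(z₀) ξ(Sz)`, `(T_a ξ)(z) = z₀ ξ(z)`
  interU : ∀ ξ : Lp ℂ 2 m,
    ((Ψ ((U : Lp ℂ 2 m →L[ℂ] Lp ℂ 2 m) ξ) : Lp ℂ 2 ρm) : B.A × Solenoid N → ℂ) =ᵐ[ρm]
      fun q => m₀ (q.2.val 0) * ((Ψ ξ : Lp ℂ 2 ρm) : B.A × Solenoid N → ℂ) (q.1, shift N q.2)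
  interT : ∀ ξ : Lp ℂ 2 m,
    ((Ψ ((T : Lp ℂ 2 m →L[ℂ] Lp ℂ 2 m) ξ) : Lp ℂ 2 ρm) : B.A × Solenoid N → ℂ) =ᵐ[ρm]
      fun q => ((q.2.val 0 : Circle) : ℂ) * ((Ψ ξ : Lp ℂ 2 ρm) : B.A × Solenoid N → ℂ) q
  -- `Ψ π' Ψ⁻¹` is the algebra of diagonal operators: an operator commutes with
  -- the representation iff it is carried to multiplication by a bounded
  -- measurable function of `a` alone
  diag : ∀ Op : Lp ℂ 2 m →L[ℂ] Lp ℂ 2 m,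
    (Commute Op (U : Lp ℂ 2 m →L[ℂ] Lp ℂ 2 m) ∧
     Commute Op (T : Lp ℂ 2 m →L[ℂ] Lp ℂ 2 m)) ↔
    ∃ g : B.A → ℂ, Measurable g ∧ (∃ C : ℝ, ∀ a, ‖g a‖ ≤ C) ∧
      ∀ ξ : Lp ℂ 2 m,
        ((Ψ (Op ξ) : Lp ℂ 2 ρm) : B.A × Solenoid N → ℂ) =ᵐ[ρm]
          fun q => g q.1 * ((Ψ ξ : Lp ℂ 2 ρm) : B.A × Solenoid N → ℂ) q

/-!
Disintegrate `m` over a countably generated model `p` of the shift-invariant sets. Since `p` is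
invariant, almost every fibre measure `ν_a` inherits the Jacobian `d = |m₀(z₀)|²`. By von Neumann's
argument every `f ∈ L²(m)` is an invariant function plus an `L²`-limit of coboundaries
`d · h ∘ S - h`. On almost every fibre the invariant part is constant and the coboundaries integrate
to zero over invariant sets, so every bounded `f` is independent of the invariant sets: `ν_a` is
ergodic.

An operator intertwining multiplication by `z₀` and the weighted shifts also intertwines
multiplication by every coordinate `z_n`, hence, by Stone–Weierstrass, by every continuous function.
An endomorphism of this kind is multiplication by a function, and commuting with the weighted shift
makes that function invariant: the commutant is the diagonal algebra. A unitary of this kind from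
`L²(ν)` to `L²(ν_a)` forces `ν ≪ ν_a`, with invariant density, hence `ν = ν_a` by ergodicity.
-/

section

open MeasureTheory ProbabilityTheory Filter
open scoped ENNReal NNReal Topology

section Jacobian

variable {X : Type*} [MeasurableSpace X] {S : X ≃ᵐ X} {d : X → ℝ≥0} {ν : Measure X}

/-- The measure `ν` has Jacobian `d(ν ∘ S)/dν = d`, where `(ν ∘ S)(E) = ν(S(E))` is encoded as the
image of `ν` under `S⁻¹`. -/
def HasJacobian (S : X ≃ᵐ X) (d : X → ℝ≥0) (ν : Measure X) : Prop :=
  ν.map S.symm = ν.withDensity fun x => (d x : ℝ≥0∞)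

namespace HasJacobian

lemma integral_smul_comp {E : Type*} [NormedAddCommGroup E] [NormedSpace ℝ E]
    (h : HasJacobian S d ν) (hd : Measurable d) (F : X → E) :
    ∫ x, d x • F (S x) ∂ν = ∫ x, F x ∂ν := by
  rw [← integral_withDensity_eq_integral_smul hd fun x => F (S x), ← h,
    S.symm.measurableEmbedding.integral_map]
  simp only [MeasurableEquiv.apply_symm_apply]

lemma restrict (h : HasJacobian S d ν) {E : Set X} (hE : MeasurableSet E) (hSE : S ⁻¹' E = E) :
    HasJacobian S d (ν.restrict E) := by
  have hSE' : S.symm ⁻¹' E = E := by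
    conv_lhs => rw [← hSE]
    rw [← Set.preimage_comp, S.self_comp_symm, Set.preimage_id]
  rw [HasJacobian, ← restrict_withDensity hE, ← h, Measure.restrict_map S.symm.measurable hE, hSE']

lemma map_symm_absolutelyContinuous (h : HasJacobian S d ν) : ν.map S.symm ≪ ν := by
  rw [h]
  exact withDensity_absolutelyContinuous _ _

lemma absolutelyContinuous_map_symm (h : HasJacobian S d ν) (hd : Measurable d)
    (hd0 : ∀ᵐ x ∂ν, d x ≠ 0) : ν ≪ ν.map S.symm := by
  rw [h]
  exact withDensity_absolutelyContinuous' hd.coe_nnreal_ennreal.aemeasurable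
    (hd0.mono fun x hx => ENNReal.coe_ne_zero.2 hx)

lemma ae_comp_of_ne_zero (h : HasJacobian S d ν) (hd : Measurable d) {P : X → Prop}
    (hP : ∀ᵐ x ∂ν, P x) : ∀ᵐ x ∂ν, d x ≠ 0 → P (S x) := by
  have hmap : ∀ᵐ x ∂(ν.map S.symm), P (S x) := by
    simpa [S.symm.measurableEmbedding.ae_map_iff] using hP
  rw [h, ae_withDensity_iff hd.coe_nnreal_ennreal] at hmap
  simpa only [ne_eq, ENNReal.coe_eq_zero] using hmap

lemma quasiMeasurePreserving (h : HasJacobian S d ν) (hd : Measurable d)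
    (hd0 : ∀ᵐ x ∂ν, d x ≠ 0) : Measure.QuasiMeasurePreserving S ν ν := by
  refine ⟨S.measurable, ?_⟩
  simpa [Measure.map_map S.measurable S.symm.measurable] using
    (h.absolutelyContinuous_map_symm hd hd0).map S.measurable

lemma integrable_comp_symm {E : Type*} [NormedAddCommGroup E] (h : HasJacobian S d ν) {C : ℝ≥0}
    (hC : ∀ x, d x ≤ C) {f : X → E} (hf : Integrable f ν) : Integrable (f ∘ S.symm) ν := by
  rw [← S.symm.measurableEmbedding.integrable_map_iff, h]
  have hle : ν.withDensity (fun x => (d x : ℝ≥0∞)) ≤ (C : ℝ≥0∞) • ν := by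
    rw [← withDensity_const]
    exact withDensity_mono (ae_of_all _ fun x => ENNReal.coe_le_coe.2 (hC x))
  exact (hf.smul_measure ENNReal.coe_ne_top).mono_measure hle

end HasJacobian

end Jacobian

section InvariantFunctions

variable {X : Type*} [MeasurableSpace X] {m : Measure X}

lemma exists_measurable_comp_eq_self_ae_eq {R : Type*} [ConditionallyCompleteLinearOrder R]
    [TopologicalSpace R] [OrderTopology R] [SecondCountableTopology R] [MeasurableSpace R]
    [BorelSpace R] {T : X → X} (hT : Measure.QuasiMeasurePreserving T m m) {w : X → R}
    (hw : AEMeasurable w m) (hinv : w ∘ T =ᵐ[m] w) :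
    ∃ w' : X → R, Measurable w' ∧ w' ∘ T = w' ∧ w' =ᵐ[m] w := by
  obtain ⟨v, hv, hwv⟩ := hw
  have hvT : v ∘ T =ᵐ[m] v := ((hT.ae_eq_comp hwv).symm.trans hinv).trans hwv
  have hviter (n : ℕ) : v ∘ T^[n] =ᵐ[m] v := by
    induction n with
    | zero => rfl
    | succ n ih =>
      rw [Function.iterate_succ, ← Function.comp_assoc]
      exact (hT.ae_eq_comp ih).trans hvT
  refine ⟨fun x => limsup (fun n : ℕ => v (T^[n] x)) atTop,
    Measurable.limsup fun n => hv.comp (hT.measurable.iterate n), ?_, ?_⟩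
  · funext x
    simp only [Function.comp_apply, ← Function.iterate_succ_apply]
    exact limsup_nat_add (fun n : ℕ => v (T^[n] x)) 1
  · filter_upwards [ae_all_iff.2 hviter, hwv] with x hx hwx
    have hconst : (fun n : ℕ => v (T^[n] x)) = fun _ => v x := funext hx
    rw [hconst, limsup_const, hwx]

/-- `p` is a factor map onto a countably generated model of the `T`-invariant sets modulo `m`: it is
itself invariant, and every invariant square-integrable function factors through it. -/
structure IsInvariantFactor {A : Type*} [MeasurableSpace A] (T : X → X) (m : Measure X)
    (p : X → A) : Prop where
  measurable : Measurable p
  comp_eq : p ∘ T = p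
  exists_ae_eq_comp : ∀ w : X → ℝ, MemLp w 2 m → w ∘ T =ᵐ[m] w →
    ∃ g : A → ℝ, Measurable g ∧ w =ᵐ[m] g ∘ p

lemma exists_isInvariantFactor [MeasurableSpace.CountablyGenerated X] [IsFiniteMeasure m]
    {T : X → X} (hT : Measure.QuasiMeasurePreserving T m m) :
    ∃ p : X → ℕ → ℝ, IsInvariantFactor T m p := by
  let I : Set (Lp ℝ 2 m) := {w | (w : X → ℝ) ∘ T =ᵐ[m] w}
  have : Fact ((2 : ℝ≥0∞) ≠ ∞) := ⟨ENNReal.ofNat_ne_top⟩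
  have : Nonempty I := ⟨0, (hT.ae_eq_comp (Lp.coeFn_zero ℝ 2 m)).trans (Lp.coeFn_zero ℝ 2 m).symm⟩
  have hdense := TopologicalSpace.denseRange_denseSeq I
  choose w hw hwT hws using fun n => exists_measurable_comp_eq_self_ae_eq hT
    (Lp.aestronglyMeasurable _).aemeasurable (TopologicalSpace.denseSeq I n).2
  let p : X → ℕ → ℝ := fun x n => w n x
  have hp : Measurable p := measurable_pi_lambda _ hw
  have hclosed := isClosed_aestronglyMeasurable (F := ℝ) (p := 2) (μ := m) hp.comap_le
  have hI (y : I) :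
      AEStronglyMeasurable[MeasurableSpace.comap p inferInstance] (y : Lp ℝ 2 m) m := by
    refine hdense.induction_on y (hclosed.preimage continuous_subtype_val) fun n => ?_
    exact ⟨w n, ((measurable_pi_apply n).comp (comap_measurable p)).stronglyMeasurable,
      (hws n).symm⟩
  refine ⟨p, hp, funext fun x => funext fun n => congrFun (hwT n) x, fun v hv hvT => ?_⟩
  obtain ⟨u, hu, hvu⟩ := hI ⟨hv.toLp v,
    ((hT.ae_eq_comp hv.coeFn_toLp).trans hvT).trans hv.coeFn_toLp.symm⟩
  obtain ⟨g, hg, rfl⟩ := hu.exists_eq_measurable_comp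
  exact ⟨g, hg.measurable, hv.coeFn_toLp.symm.trans hvu⟩

lemma IsInvariantFactor.exists_bounded_ae_eq_comp {A : Type*} [MeasurableSpace A] {T : X → X}
    {p : X → A} (hp : IsInvariantFactor T m p) {G : X → ℂ} (hG : MemLp G 2 m)
    (hGT : G ∘ T =ᵐ[m] G) {C : ℝ} (hC : 0 ≤ C) (hGC : ∀ᵐ x ∂m, ‖G x‖ ≤ C) :
    ∃ g : A → ℂ, Measurable g ∧ (∀ a, ‖g a‖ ≤ C) ∧ G =ᵐ[m] g ∘ p := by
  obtain ⟨g₁, hg₁, hre⟩ := hp.exists_ae_eq_comp (fun x => (G x).re) hG.re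
    (hGT.fun_comp Complex.re)
  obtain ⟨g₂, hg₂, him⟩ := hp.exists_ae_eq_comp (fun x => (G x).im) hG.im
    (hGT.fun_comp Complex.im)
  let g : A → ℂ := fun a => g₁ a + g₂ a * Complex.I
  have hg : Measurable g := by fun_prop
  have hs : MeasurableSet {a | ‖g a‖ ≤ C} := measurableSet_le hg.norm measurable_const
  refine ⟨{a | ‖g a‖ ≤ C}.indicator g, hg.indicator hs, fun a => ?_, ?_⟩
  · by_cases ha : ‖g a‖ ≤ C <;> simp [Set.indicator, ha, hC]
  · filter_upwards [hre, him, hGC] with x h₁ h₂ hx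
    have hgx : g (p x) = G x := by
      rw [← Complex.re_add_im (G x), h₁, h₂]
      rfl
    simp [Set.indicator, hgx, hx]

end InvariantFunctions

section Coboundaries

variable {X : Type*} [MeasurableSpace X] {S : X ≃ᵐ X} {d : X → ℝ≥0} {m : Measure X} {C : ℝ≥0}

/-- The subspace of `L²(m)` of coboundaries `d · h ∘ S - h` with `h` bounded and measurable. -/
def coboundaries (S : X ≃ᵐ X) (d : X → ℝ≥0) (m : Measure X) : Submodule ℝ (Lp ℝ 2 m) where
  carrier := {y | ∃ h : X → ℝ, Measurable h ∧ (∃ B, ∀ x, ‖h x‖ ≤ B) ∧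
    y =ᵐ[m] fun x => d x • h (S x) - h x}
  zero_mem' := ⟨0, measurable_zero, ⟨0, by simp⟩, by
    filter_upwards [Lp.coeFn_zero ℝ 2 m] with x hx
    simpa using hx⟩
  add_mem' := by
    rintro y y' ⟨h, hm, ⟨B, hB⟩, hy⟩ ⟨h', hm', ⟨B', hB'⟩, hy'⟩
    refine ⟨h + h', hm.add hm', ⟨B + B', fun x => norm_add_le_of_le (hB x) (hB' x)⟩, ?_⟩
    filter_upwards [Lp.coeFn_add y y', hy, hy'] with x hadd hx hx'
    rw [hadd, Pi.add_apply, hx, hx', Pi.add_apply, Pi.add_apply, smul_add]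
    abel
  smul_mem' := by
    rintro c y ⟨h, hm, ⟨B, hB⟩, hy⟩
    refine ⟨c • h, hm.const_smul c, ⟨‖c‖ * B, fun x => ?_⟩, ?_⟩
    · exact (norm_smul_le c (h x)).trans (by gcongr; exact hB x)
    · filter_upwards [Lp.coeFn_smul c y, hy] with x hsmul hx
      rw [hsmul, Pi.smul_apply, hx, Pi.smul_apply, Pi.smul_apply, smul_sub, smul_comm]

lemma memLp_smul_comp [IsFiniteMeasure m] (hd : Measurable d) (hC : ∀ x, d x ≤ C) {h : X → ℝ}
    (hh : Measurable h) {B : ℝ} (hB : ∀ x, ‖h x‖ ≤ B) (q : ℝ≥0∞) :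
    MemLp (fun x => d x • h (S x)) q m := by
  refine MemLp.of_bound (C := C * B)
    (hd.smul (hh.comp S.measurable)).aestronglyMeasurable (ae_of_all _ fun x => ?_)
  rw [NNReal.smul_def, norm_smul, NNReal.norm_eq]
  gcongr
  exacts [hC x, hB (S x)]

lemma HasJacobian.comp_ae_eq_of_mem_coboundaries_orthogonal [IsFiniteMeasure m]
    (h : HasJacobian S d m) (hd : Measurable d) (hC : ∀ x, d x ≤ C) (hd0 : ∀ᵐ x ∂m, d x ≠ 0)
    {w : Lp ℝ 2 m} (hw : w ∈ (coboundaries S d m)ᗮ) : w ∘ S =ᵐ[m] w := by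
  have hwi : Integrable w m := (Lp.memLp w).integrable one_le_two
  have hint {g : X → ℝ} (hg : MemLp g ∞ m) : Integrable (fun x => g x * w x) m :=
    hwi.mul_of_top_right hg
  have hsymm : w ∘ S.symm =ᵐ[m] w := by
    refine Integrable.ae_eq_of_forall_setIntegral_eq _ _ (h.integrable_comp_symm hC hwi) hwi ?_
    intro E hE _
    let g : X → ℝ := E.indicator 1
    have hg : Measurable g := measurable_one.indicator hE
    have hg1 (x : X) : ‖g x‖ ≤ 1 := by by_cases hx : x ∈ E <;> simp [g, hx]
    have hgL (q : ℝ≥0∞) : MemLp g q m := .of_bound hg.aestronglyMeasurable 1 (ae_of_all _ hg1)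
    have hdgL (q : ℝ≥0∞) := memLp_smul_comp (S := S) (m := m) hd hC hg hg1 q
    have hmem : ((hdgL 2).sub (hgL 2)).toLp ∈ coboundaries S d m :=
      ⟨g, hg, ⟨1, hg1⟩, MemLp.coeFn_toLp _⟩
    have horth : ∫ x, (d x • g (S x)) * w x ∂m = ∫ x, g x * w x ∂m := by
      rw [← sub_eq_zero, ← integral_sub (hint (hdgL ∞)) (hint (hgL ∞)), ← hw _ hmem, L2.inner_def]
      refine integral_congr_ae ?_
      filter_upwards [MemLp.coeFn_toLp ((hdgL 2).sub (hgL 2))] with x hx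
      rw [hx, RCLike.inner_apply, conj_trivial, Pi.sub_apply]
      ring
    have hind (v : X → ℝ) : ∫ x in E, v x ∂m = ∫ x, g x * v x ∂m := by
      rw [← integral_indicator hE]
      refine integral_congr_ae (ae_of_all _ fun x => ?_)
      by_cases hx : x ∈ E <;> simp [g, hx]
    rw [hind, hind, ← horth, ← h.integral_smul_comp hd]
    simp
  simpa [Function.comp_assoc] using ((h.quasiMeasurePreserving hd hd0).ae_eq_comp hsymm).symm

-- The orthogonal projection onto the closed span of the coboundaries, as in von Neumann's proof of
-- the mean ergodic theorem.
lemma HasJacobian.exists_invariant_approx [IsFiniteMeasure m] (h : HasJacobian S d m)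
    (hd : Measurable d) (hC : ∀ x, d x ≤ C) (hd0 : ∀ᵐ x ∂m, d x ≠ 0) {f : X → ℝ}
    (hf : MemLp f 2 m) :
    ∃ w : X → ℝ, MemLp w 2 m ∧ w ∘ S =ᵐ[m] w ∧ ∀ ε : ℝ≥0∞, ε ≠ 0 →
      ∃ k : X → ℝ, Measurable k ∧ (∃ B, ∀ x, ‖k x‖ ≤ B) ∧
        ∫⁻ x, ‖f x - (d x • k (S x) - k x) - w x‖ₑ ∂m ≤ ε := by
  let K := (coboundaries S d m).topologicalClosure
  have : CompleteSpace K := (Submodule.isClosed_topologicalClosure _).completeSpace_coe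
  let F : Lp ℝ 2 m := hf.toLp
  let P : Lp ℝ 2 m := K.starProjection F
  have hPK : P ∈ closure (coboundaries S d m : Set (Lp ℝ 2 m)) :=
    Submodule.starProjection_apply_mem K F
  have horth : F - P ∈ (coboundaries S d m)ᗮ :=
    Submodule.orthogonal_le (Submodule.le_topologicalClosure _)
      (Submodule.sub_starProjection_mem_orthogonal F)
  refine ⟨(F - P : Lp ℝ 2 m), Lp.memLp _,
    h.comp_ae_eq_of_mem_coboundaries_orthogonal hd hC hd0 horth, fun ε hε => ?_⟩
  let M : ℝ≥0∞ := m Set.univ ^ (1 / (1 : ℝ≥0∞).toReal - 1 / (2 : ℝ≥0∞).toReal)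
  have hM : M ≠ ∞ := ENNReal.rpow_ne_top_of_nonneg (by norm_num) (measure_ne_top m _)
  obtain ⟨y, ⟨k, hk, hkB, hyk⟩, hy⟩ := EMetric.mem_closure_iff.1 hPK (ε / M)
    (ENNReal.div_pos hε hM)
  refine ⟨k, hk, hkB, ?_⟩
  calc ∫⁻ x, ‖f x - (d x • k (S x) - k x) - (F - P : Lp ℝ 2 m) x‖ₑ ∂m
      = eLpNorm (P - y : Lp ℝ 2 m) 1 m := by
        rw [eLpNorm_one_eq_lintegral_enorm]
        refine lintegral_congr_ae ?_
        filter_upwards [hyk, hf.coeFn_toLp, Lp.coeFn_sub F P, Lp.coeFn_sub P y] with x h₁ h₂ h₃ h₄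
        rw [h₃, h₄, Pi.sub_apply, Pi.sub_apply, h₁, show (F : X → ℝ) x = f x from h₂]
        congr 1
        abel
    _ ≤ eLpNorm (P - y : Lp ℝ 2 m) 2 m * M :=
        eLpNorm_le_eLpNorm_mul_rpow_measure_univ one_le_two (Lp.aestronglyMeasurable _)
    _ ≤ ε / M * M := by rw [← Lp.enorm_def, ← edist_eq_enorm_sub]; gcongr
    _ ≤ ε := by rw [mul_comm]; exact ENNReal.mul_div_le

end Coboundaries

section Disintegration

variable {X A : Type*} [MeasurableSpace X] [MeasurableSpace A] {m : Measure X} {p : X → A}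
  {κ : Kernel A X}

lemma lintegral_lintegral_of_compProd_eq [IsFiniteMeasure m] [IsMarkovKernel κ]
    (hp : Measurable p) (hκ : m.map p ⊗ₘ κ = m.map fun x => (p x, x)) {F : A × X → ℝ≥0∞}
    (hF : Measurable F) : ∫⁻ a, ∫⁻ x, F (a, x) ∂κ a ∂m.map p = ∫⁻ x, F (p x, x) ∂m := by
  have hgraph : Measurable fun x => (p x, x) := hp.prodMk measurable_id
  rw [← Measure.lintegral_compProd hF, hκ, lintegral_map hF hgraph]

lemma measure_eq_lintegral_of_compProd_eq [IsFiniteMeasure m] [IsMarkovKernel κ]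
    (hp : Measurable p) (hκ : m.map p ⊗ₘ κ = m.map fun x => (p x, x)) {E : Set X}
    (hE : MeasurableSet E) : m E = ∫⁻ a, κ a E ∂m.map p := by
  have hgraph : Measurable fun x => (p x, x) := hp.prodMk measurable_id
  rw [← setLIntegral_univ, ← Measure.compProd_apply_prod MeasurableSet.univ hE, hκ,
    Measure.map_apply hgraph (MeasurableSet.univ.prod hE)]
  simp [Set.mk_preimage_prod]

lemma ae_ae_of_compProd_eq [IsFiniteMeasure m] [IsMarkovKernel κ] (hp : Measurable p)
    (hκ : m.map p ⊗ₘ κ = m.map fun x => (p x, x)) {P : X → Prop} (hP : ∀ᵐ x ∂m, P x) :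
    ∀ᵐ a ∂m.map p, ∀ᵐ x ∂κ a, P x := by
  have hgraph : Measurable fun x => (p x, x) := hp.prodMk measurable_id
  refine Measure.ae_ae_of_ae_compProd (p := fun q => P q.2) ?_
  refine (measurable_snd.quasiMeasurePreserving (m.map p ⊗ₘ κ)).ae ?_
  rwa [hκ, Measure.map_map measurable_snd hgraph, Function.comp_def, Measure.map_id']

lemma map_withDensity_comp {Y : Type*} [MeasurableSpace Y] {g : X → Y} (hg : Measurable g)
    {f : Y → ℝ≥0∞} (hf : Measurable f) :
    (m.withDensity fun x => f (g x)).map g = (m.map g).withDensity f := by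
  ext s hs
  rw [Measure.map_apply hg hs, withDensity_apply _ (hg hs), withDensity_apply _ hs,
    setLIntegral_map hs hf hg]

lemma HasJacobian.compProd_map_symm [IsFiniteMeasure m] [IsMarkovKernel κ] {S : X ≃ᵐ X}
    {d : X → ℝ≥0} (h : HasJacobian S d m) (hd : Measurable d) (hp : Measurable p)
    (hpS : p ∘ S = p) (hκ : m.map p ⊗ₘ κ = m.map fun x => (p x, x)) :
    m.map p ⊗ₘ κ.map S.symm = (m.map p ⊗ₘ κ).withDensity fun q => d q.2 := by
  have hgraph : Measurable fun x => (p x, x) := hp.prodMk measurable_id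
  have hpS' (x : X) : p (S.symm x) = p x := by simpa using (congrFun hpS (S.symm x)).symm
  calc m.map p ⊗ₘ κ.map S.symm
      = (m.map fun x => (p x, x)).map (Prod.map id S.symm) := by
        rw [Measure.compProd_map S.symm.measurable, hκ]
    _ = m.map fun x => (p (S.symm x), S.symm x) := by
        rw [Measure.map_map (measurable_id.prodMap S.symm.measurable) hgraph]
        simp only [Function.comp_def, Prod.map_apply, id_eq, hpS']
    _ = (m.withDensity fun x => (d x : ℝ≥0∞)).map fun x => (p x, x) := by
        rw [← h, Measure.map_map hgraph S.symm.measurable, Function.comp_def]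
    _ = (m.map fun x => (p x, x)).withDensity fun q => (d q.2 : ℝ≥0∞) :=
        map_withDensity_comp (f := fun q => (d q.2 : ℝ≥0∞)) hgraph
          (hd.coe_nnreal_ennreal.comp measurable_snd)
    _ = (m.map p ⊗ₘ κ).withDensity fun q => (d q.2 : ℝ≥0∞) := by rw [hκ]

lemma HasJacobian.ae_of_compProd_eq [MeasurableSpace.CountablyGenerated X] [IsFiniteMeasure m]
    [IsMarkovKernel κ] {S : X ≃ᵐ X} {d : X → ℝ≥0} {C : ℝ≥0} (h : HasJacobian S d m)
    (hd : Measurable d) (hC : ∀ x, d x ≤ C) (hp : Measurable p) (hpS : p ∘ S = p)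
    (hκ : m.map p ⊗ₘ κ = m.map fun x => (p x, x)) : ∀ᵐ a ∂m.map p, HasJacobian S d (κ a) := by
  have hdens : Measurable (Function.uncurry fun (_ : A) x => (d x : ℝ≥0∞)) :=
    hd.coe_nnreal_ennreal.comp measurable_snd
  have : IsFiniteKernel (κ.withDensity fun _ x => (d x : ℝ≥0∞)) :=
    Kernel.isFiniteKernel_withDensity_of_bounded κ (B := C) ENNReal.coe_ne_top
      fun _ x => ENNReal.coe_le_coe.2 (hC x)
  have heq : m.map p ⊗ₘ κ.map S.symm = m.map p ⊗ₘ κ.withDensity fun _ x => (d x : ℝ≥0∞) := by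
    rw [h.compProd_map_symm hd hp hpS hκ, Measure.compProd_withDensity hdens]
  filter_upwards [Kernel.ae_eq_of_compProd_eq heq] with a ha
  rwa [Kernel.map_apply κ S.symm.measurable, Kernel.withDensity_apply κ hdens] at ha

end Disintegration

section ErgodicFibres

variable {X A : Type*} [MeasurableSpace X] [MeasurableSpace A] {S : X ≃ᵐ X} {d : X → ℝ≥0}
  {C : ℝ≥0} {m ν : Measure X}

lemma preErgodic_of_forall_measureReal_inter_eq [IsProbabilityMeasure ν] {T : X → X}
    {𝒜 : Set (Set X)} (h𝒜 : ‹MeasurableSpace X› = MeasurableSpace.generateFrom 𝒜)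
    (hpi : IsPiSystem 𝒜)
    (h : ∀ s ∈ 𝒜, ∃ c : ℝ, ∀ E, MeasurableSet E → T ⁻¹' E = E →
      ν.real (E ∩ s) = c * ν.real E) : PreErgodic T ν := by
  refine ⟨fun E hE hTE => ?_⟩
  have hsets : IndepSets {E} 𝒜 ν := by
    rw [IndepSets_iff]
    intro _ s hE' hs
    rw [Set.mem_singleton_iff.1 hE']
    obtain ⟨c, hc⟩ := h s hs
    have hcs := hc Set.univ MeasurableSet.univ Set.preimage_univ
    rw [Set.univ_inter, probReal_univ, mul_one] at hcs
    rw [← hcs] at hc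
    rw [← ENNReal.toReal_eq_toReal_iff' (measure_ne_top _ _)
      (ENNReal.mul_ne_top (measure_ne_top _ _) (measure_ne_top _ _)), ENNReal.toReal_mul]
    exact (hc _ hE hTE).trans (mul_comm _ _)
  have hindep : Indep (MeasurableSpace.generateFrom {E}) ‹MeasurableSpace X› ν :=
    hsets.indep (MeasurableSpace.generateFrom_le (by simpa using hE)) le_rfl
      (IsPiSystem.singleton E) hpi rfl h𝒜
  have hself : IndepSet E E ν := hindep.indepSet_of_measurableSet
    (MeasurableSpace.measurableSet_generateFrom (Set.mem_singleton E)) hE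
  rw [eventuallyConst_set', ae_eq_empty, ae_eq_univ_iff_measure_eq hE.nullMeasurableSet,
    measure_univ]
  exact measure_eq_zero_or_one_of_indepSet_self hself

-- The coboundary integrates to `0` over every invariant set.
lemma HasJacobian.enorm_setIntegral_sub_le [IsFiniteMeasure ν] (h : HasJacobian S d ν)
    (hd : Measurable d) (hC : ∀ x, d x ≤ C) {f k : X → ℝ} (hf : Integrable f ν)
    (hk : Measurable k) {B : ℝ} (hB : ∀ x, ‖k x‖ ≤ B) (c : ℝ) {E : Set X} (hE : MeasurableSet E)
    (hSE : S ⁻¹' E = E) :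
    ‖∫ x in E, f x ∂ν - c * ν.real E‖ₑ ≤ ∫⁻ x, ‖f x - (d x • k (S x) - k x) - c‖ₑ ∂ν := by
  have hkE : Integrable k (ν.restrict E) :=
    (Integrable.of_bound hk.aestronglyMeasurable B (ae_of_all _ hB)).restrict
  have hdkE : Integrable (fun x => d x • k (S x)) (ν.restrict E) :=
    memLp_one_iff_integrable.1 (memLp_smul_comp hd hC hk hB 1)
  have hcob : Integrable (fun x => d x • k (S x) - k x) (ν.restrict E) := hdkE.sub hkE
  have hfcob : Integrable (fun x => f x - (d x • k (S x) - k x)) (ν.restrict E) :=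
    hf.restrict.sub hcob
  have hsplit : ∫ x in E, (f x - (d x • k (S x) - k x) - c) ∂ν
      = ∫ x in E, f x ∂ν - c * ν.real E := by
    rw [integral_sub hfcob (integrable_const c), integral_sub hf.restrict hcob,
      integral_sub hdkE hkE,
      (h.restrict hE hSE).integral_smul_comp hd, sub_self, sub_zero, setIntegral_const,
      smul_eq_mul, mul_comm]
  rw [← hsplit]
  exact (enorm_integral_le_lintegral_enorm _).trans (setLIntegral_le_lintegral _ _)

lemma ae_iInf_eq_zero_of_lintegral_le {ν : Measure A} {φ : ℕ → A → ℝ≥0∞}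
    (hφ : ∀ n, Measurable (φ n)) (h : ∀ n : ℕ, ∫⁻ a, φ n a ∂ν ≤ (n : ℝ≥0∞)⁻¹) :
    ∀ᵐ a ∂ν, ⨅ n, φ n a = 0 := by
  have hzero : ∫⁻ a, ⨅ n, φ n a ∂ν = 0 :=
    le_antisymm (ge_of_tendsto' ENNReal.tendsto_inv_nat_nhds_zero fun n =>
      (lintegral_mono fun a => iInf_le _ n).trans (h n)) zero_le
  exact (lintegral_eq_zero_iff (Measurable.iInf hφ)).1 hzero

lemma HasJacobian.ae_exists_setIntegral_eq [MeasurableSpace.CountablyGenerated X]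
    [IsFiniteMeasure m] (h : HasJacobian S d m) (hd : Measurable d) (hC : ∀ x, d x ≤ C)
    (hd0 : ∀ᵐ x ∂m, d x ≠ 0) {p : X → A} (hp : IsInvariantFactor S m p) {κ : Kernel A X}
    [IsMarkovKernel κ] (hκ : m.map p ⊗ₘ κ = m.map fun x => (p x, x)) {f : X → ℝ}
    (hf : Measurable f) {B : ℝ} (hB : ∀ x, ‖f x‖ ≤ B) :
    ∀ᵐ a ∂m.map p, ∃ c : ℝ, ∀ E, MeasurableSet E → S ⁻¹' E = E →
      ∫ x in E, f x ∂κ a = c * (κ a).real E := by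
  obtain ⟨w, hw, hwS, happrox⟩ := h.exists_invariant_approx hd hC hd0
    (.of_bound hf.aestronglyMeasurable B (ae_of_all _ hB) : MemLp f 2 m)
  obtain ⟨g, hg, hwg⟩ := hp.exists_ae_eq_comp w hw hwS
  choose k hk hkB hkw using fun n : ℕ => happrox (n : ℝ≥0∞)⁻¹ (by simp)
  let Φ (n : ℕ) (q : A × X) : ℝ≥0∞ := ‖f q.2 - (d q.2 • k n (S q.2) - k n q.2) - g q.1‖ₑ
  have hΦ (n : ℕ) : Measurable (Φ n) := by
    have := S.measurable
    fun_prop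
  have hint (n : ℕ) : ∫⁻ a, ∫⁻ x, Φ n (a, x) ∂κ a ∂m.map p ≤ (n : ℝ≥0∞)⁻¹ := by
    rw [lintegral_lintegral_of_compProd_eq hp.measurable hκ (hΦ n)]
    refine (lintegral_congr_ae ?_).trans_le (hkw n)
    filter_upwards [hwg] with x hx
    rw [hx, Function.comp_apply]
  filter_upwards [ae_iInf_eq_zero_of_lintegral_le (fun n => (hΦ n).lintegral_kernel_prod_right')
    hint, h.ae_of_compProd_eq hd hC hp.measurable hp.comp_eq hκ] with a ha hJ
  refine ⟨g a, fun E hE hSE => ?_⟩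
  have hfa : Integrable f (κ a) := .of_bound hf.aestronglyMeasurable B (ae_of_all _ hB)
  rw [← sub_eq_zero, ← enorm_eq_zero, ← nonpos_iff_eq_zero, ← ha]
  refine le_iInf fun n => ?_
  obtain ⟨B', hB'⟩ := hkB n
  exact hJ.enorm_setIntegral_sub_le hd hC hfa (hk n) hB' (g a) hE hSE

theorem HasJacobian.ae_preErgodic [MeasurableSpace.CountablyGenerated X] [IsFiniteMeasure m]
    (h : HasJacobian S d m) (hd : Measurable d) (hC : ∀ x, d x ≤ C) (hd0 : ∀ᵐ x ∂m, d x ≠ 0)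
    {p : X → A} (hp : IsInvariantFactor S m p) {κ : Kernel A X} [IsMarkovKernel κ]
    (hκ : m.map p ⊗ₘ κ = m.map fun x => (p x, x)) : ∀ᵐ a ∂m.map p, PreErgodic S (κ a) := by
  obtain ⟨b, hb, hgen⟩ := MeasurableSpace.CountablyGenerated.isCountablyGenerated (α := X)
  let 𝒜 := generateSetAlgebra b
  have h𝒜 : ‹MeasurableSpace X› = MeasurableSpace.generateFrom 𝒜 := by
    rw [generateFrom_generateSetAlgebra_eq]
    exact hgen
  have hpi : IsPiSystem 𝒜 := fun s hs t ht _ =>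
    isSetAlgebra_generateSetAlgebra.inter_mem hs ht
  have hmeas (s : Set X) (hs : s ∈ 𝒜) : MeasurableSet s := by
    rw [h𝒜]
    exact MeasurableSpace.measurableSet_generateFrom hs
  have hcountable : ∀ᵐ a ∂m.map p, ∀ s ∈ 𝒜, ∃ c : ℝ, ∀ E, MeasurableSet E → S ⁻¹' E = E →
      (κ a).real (E ∩ s) = c * (κ a).real E := by
    refine (ae_ball_iff (countable_generateSetAlgebra hb)).2 fun s hs => ?_
    have hbound (x : X) : ‖s.indicator (1 : X → ℝ) x‖ ≤ 1 := by
      by_cases hx : x ∈ s <;> simp [hx]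
    filter_upwards [h.ae_exists_setIntegral_eq hd hC hd0 hp hκ
      (measurable_one.indicator (hmeas s hs)) hbound] with a ha
    simpa [integral_indicator_one, hmeas s hs, measureReal_restrict_apply, Set.inter_comm] using ha
  filter_upwards [hcountable] with a ha
  exact preErgodic_of_forall_measureReal_inter_eq h𝒜 hpi ha

end ErgodicFibres

section Uniqueness

variable {X : Type*} [MeasurableSpace X] {S : X ≃ᵐ X} {d : X → ℝ≥0} {κ ν : Measure X}

lemma HasJacobian.density_comp_ae_eq [SigmaFinite κ] (hκ : HasJacobian S d κ) (hd : Measurable d)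
    (hd0 : ∀ᵐ x ∂κ, d x ≠ 0) {r : X → ℝ≥0∞} (hr : Measurable r)
    (hκr : HasJacobian S d (κ.withDensity r)) : r ∘ S =ᵐ[κ] r := by
  have hd' : Measurable fun x => (d x : ℝ≥0∞) := hd.coe_nnreal_ennreal
  have hrS : Measurable (r ∘ S) := hr.comp S.measurable
  have heq : κ.withDensity ((fun x => (d x : ℝ≥0∞)) * (r ∘ S)) =
      κ.withDensity ((fun x => (d x : ℝ≥0∞)) * r) :=
    calc κ.withDensity ((fun x => (d x : ℝ≥0∞)) * (r ∘ S))
        = (κ.map S.symm).withDensity (r ∘ S) := by rw [hκ, withDensity_mul κ hd' hrS]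
      _ = (κ.withDensity r).map S.symm := by
          rw [← map_withDensity_comp S.symm.measurable hrS]
          simp only [Function.comp_apply, MeasurableEquiv.apply_symm_apply]
      _ = κ.withDensity ((fun x => (d x : ℝ≥0∞)) * r) := by
          rw [hκr, mul_comm, withDensity_mul κ hr hd']
  filter_upwards [(withDensity_eq_iff_of_sigmaFinite (hd'.mul hrS).aemeasurable
    (hd'.mul hr).aemeasurable).1 heq, hd0] with x hx hdx
  exact (ENNReal.mul_right_inj (ENNReal.coe_ne_zero.2 hdx) ENNReal.coe_ne_top).1 hx

theorem HasJacobian.eq_of_absolutelyContinuous [IsProbabilityMeasure κ] [IsProbabilityMeasure ν]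
    (hκ : HasJacobian S d κ) (hν : HasJacobian S d ν) (hd : Measurable d)
    (hd0 : ∀ᵐ x ∂κ, d x ≠ 0) (herg : PreErgodic S κ) (hac : ν ≪ κ) : ν = κ := by
  have hdens : κ.withDensity (ν.rnDeriv κ) = ν := Measure.withDensity_rnDeriv_eq ν κ hac
  have hinv : ν.rnDeriv κ ∘ S =ᵐ[κ] ν.rnDeriv κ :=
    hκ.density_comp_ae_eq hd hd0 (Measure.measurable_rnDeriv ν κ) (hdens.symm ▸ hν)
  have hquasi : QuasiErgodic S κ := ⟨hκ.quasiMeasurePreserving hd hd0, herg⟩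
  obtain ⟨c, hc⟩ := hquasi.ae_eq_const_of_ae_eq_comp₀
    (Measure.measurable_rnDeriv ν κ).nullMeasurable hinv
  have hscale : c • κ = ν := by
    rw [← hdens, withDensity_congr_ae hc]
    exact (withDensity_const c).symm
  have hc1 : c = 1 := by simpa using congrArg (fun μ : Measure X => μ Set.univ) hscale
  rw [← hscale, hc1, one_smul]

end Uniqueness

section LpMultipliers

variable {X : Type*} [MeasurableSpace X] {ν : Measure X}

lemma lintegral_enorm_sq (ξ : Lp ℂ 2 ν) : ∫⁻ x, ‖ξ x‖ₑ ^ 2 ∂ν = ‖ξ‖ₑ ^ 2 := by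
  have h := eLpNorm_nnreal_pow_eq_lintegral (μ := ν) (f := (ξ : X → ℂ)) (p := 2) two_ne_zero
  rw [Lp.enorm_def]
  simpa using h.symm

lemma ae_norm_le_opNorm_of_mul [IsFiniteMeasure ν] {L : Lp ℂ 2 ν →L[ℂ] Lp ℂ 2 ν} {G : X → ℂ}
    (hGm : AEStronglyMeasurable G ν) (hG : ∀ ξ, L ξ =ᵐ[ν] fun x => G x * ξ x) :
    ∀ᵐ x ∂ν, ‖G x‖ ≤ ‖L‖ := by
  have key : (fun x => ‖G x‖ₑ ^ 2) ≤ᵐ[ν] fun _ => ‖L‖ₑ ^ 2 := by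
    refine ae_le_of_forall_setLIntegral_le_of_sigmaFinite₀ (hGm.enorm.pow_const 2) fun s hs _ => ?_
    let ξ : Lp ℂ 2 ν := indicatorConstLp 2 hs (measure_ne_top ν s) 1
    have hξ : ξ =ᵐ[ν] s.indicator 1 := indicatorConstLp_coeFn
    have hξs : ‖ξ‖ₑ ^ 2 = ν s := by
      rw [← lintegral_enorm_sq, ← lintegral_indicator_one hs]
      refine lintegral_congr_ae ?_
      filter_upwards [hξ] with x hx
      by_cases hxs : x ∈ s <;> simp [hx, hxs]
    calc ∫⁻ x in s, ‖G x‖ₑ ^ 2 ∂ν = ‖L ξ‖ₑ ^ 2 := by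
          rw [← lintegral_enorm_sq, ← lintegral_indicator hs]
          refine lintegral_congr_ae ?_
          filter_upwards [hG ξ, hξ] with x hGx hx
          by_cases hxs : x ∈ s <;> simp [hGx, hx, hxs]
      _ ≤ (‖L‖ₑ * ‖ξ‖ₑ) ^ 2 := by gcongr; exact L.le_opENorm ξ
      _ = ∫⁻ _ in s, ‖L‖ₑ ^ 2 ∂ν := by rw [mul_pow, hξs, setLIntegral_const]
  filter_upwards [key] with x hx
  rwa [ENNReal.pow_le_pow_left_iff two_ne_zero, enorm_le_iff_norm_le] at hx

variable {S : X → X} {w : X → ℂ}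

/-- `U` acts on `L²(ν)` as the weighted composition operator `ξ ↦ w · (ξ ∘ S)`. -/
def IsWeightedComp (S : X → X) (w : X → ℂ) (U : Lp ℂ 2 ν →L[ℂ] Lp ℂ 2 ν) : Prop :=
  ∀ ξ, U ξ =ᵐ[ν] fun x => w x * ξ (S x)

lemma IsWeightedComp.comp_ae_eq_of_commute [IsFiniteMeasure ν] {U L : Lp ℂ 2 ν →L[ℂ] Lp ℂ 2 ν}
    (hU : IsWeightedComp S w U) (hS : Measure.QuasiMeasurePreserving S ν ν)
    (hw0 : ∀ᵐ x ∂ν, w x ≠ 0) (hUL : Commute L U) {G : X → ℂ}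
    (hG : ∀ ξ, L ξ =ᵐ[ν] fun x => G x * ξ x) : G ∘ S =ᵐ[ν] G := by
  let one : Lp ℂ 2 ν := Lp.const 2 ν 1
  have hone : one =ᵐ[ν] Function.const X 1 := Lp.coeFn_const 2 ν 1
  have hcomm : L (U one) = U (L one) := congrArg (· one) hUL.eq
  filter_upwards [hw0, hU one, hU (L one), hG (U one), hS.ae_eq_comp (hG one),
    hS.ae_eq_comp hone] with x hx hU1 hUL1 hLU1 hLS hSone
  have hGw : G x * (w x * one (S x)) = w x * L one (S x) := by
    rw [← hU1, ← hLU1, hcomm, hUL1]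
  simp only [Function.comp_apply, Function.const_apply] at hLS hSone
  rw [hLS, hSone, mul_one, mul_one, mul_comm] at hGw
  exact (mul_left_cancel₀ hx hGw).symm

lemma IsWeightedComp.commute_of_mul_comp {U L : Lp ℂ 2 ν →L[ℂ] Lp ℂ 2 ν}
    (hU : IsWeightedComp S w U) (hS : Measure.QuasiMeasurePreserving S ν ν) {G : X → ℂ}
    (hG : ∀ ξ, L ξ =ᵐ[ν] fun x => G x * ξ x) (hGS : G ∘ S = G) : Commute L U := by
  refine ContinuousLinearMap.ext fun ξ => Lp.ext ?_
  change L (U ξ) =ᵐ[ν] U (L ξ)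
  filter_upwards [hG (U ξ), hU ξ, hU (L ξ), hS.ae_eq_comp (hG ξ)] with x hl hUξ hr hLS
  simp only [Function.comp_apply] at hLS
  rw [hl, hUξ, hr, hLS, ← Function.comp_apply (f := G), hGS, mul_left_comm]

end LpMultipliers

section MultiplicationOperators

variable {X : Type*} [TopologicalSpace X] [CompactSpace X] [MeasurableSpace X] [BorelSpace X]
  {ν κ : Measure X} [IsFiniteMeasure ν] [IsFiniteMeasure κ]

/-- The representation of `C(X, ℂ)` on `L²(ν)` by multiplication operators. -/
def mulOp (ν : Measure X) [IsFiniteMeasure ν] :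
    C(X, ℂ) →L[ℂ] Lp ℂ 2 ν →L[ℂ] Lp ℂ 2 ν :=
  (ContinuousLinearMap.mul ℂ ℂ).holderL ν ∞ 2 2 ∘L ContinuousMap.toLp ∞ ν ℂ

lemma coeFn_mulOp (f : C(X, ℂ)) (ξ : Lp ℂ 2 ν) : mulOp ν f ξ =ᵐ[ν] fun x => f x * ξ x := by
  filter_upwards [(ContinuousLinearMap.mul ℂ ℂ).coeFn_holder (r := 2)
    (ContinuousMap.toLp ∞ ν ℂ f) ξ, ContinuousMap.coeFn_toLp (p := ∞) (𝕜 := ℂ) ν f] with x h hf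
  exact h.trans (by rw [hf]; rfl)

lemma mulOp_mul (f g : C(X, ℂ)) : mulOp ν (f * g) = mulOp ν f ∘L mulOp ν g := by
  ext1 ξ
  refine Lp.ext ?_
  filter_upwards [coeFn_mulOp (f * g) ξ, coeFn_mulOp f (mulOp ν g ξ), coeFn_mulOp g ξ]
    with x hfg hf hg
  rw [hfg, ContinuousLinearMap.comp_apply, hf, hg, ContinuousMap.mul_apply, mul_assoc]

lemma mulOp_one : mulOp ν 1 = ContinuousLinearMap.id ℂ (Lp ℂ 2 ν) := by
  ext1 ξ
  refine Lp.ext ?_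
  filter_upwards [coeFn_mulOp 1 ξ] with x hx
  simpa using hx

/-- The continuous functions whose multiplication operators are intertwined by `L`. -/
def intertwinerAlgebra (L : Lp ℂ 2 ν →L[ℂ] Lp ℂ 2 κ) : Subalgebra ℂ C(X, ℂ) where
  carrier := {f | L ∘L mulOp ν f = mulOp κ f ∘L L}
  mul_mem' {f g} hf hg := by
    rw [Set.mem_ofPred_eq] at *
    rw [mulOp_mul, mulOp_mul, ← ContinuousLinearMap.comp_assoc, hf, ContinuousLinearMap.comp_assoc,
      hg, ContinuousLinearMap.comp_assoc]
  add_mem' {f g} hf hg := by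
    rw [Set.mem_ofPred_eq] at *
    rw [map_add, map_add, ContinuousLinearMap.comp_add, ContinuousLinearMap.add_comp, hf, hg]
  algebraMap_mem' c := by
    rw [Set.mem_ofPred_eq, Algebra.algebraMap_eq_smul_one, map_smul, map_smul, mulOp_one, mulOp_one]
    ext1 ξ
    simp

lemma mem_intertwinerAlgebra {L : Lp ℂ 2 ν →L[ℂ] Lp ℂ 2 κ} {f : C(X, ℂ)} :
    f ∈ intertwinerAlgebra L ↔ ∀ ξ, L (mulOp ν f ξ) = mulOp κ f (L ξ) :=
  ContinuousLinearMap.ext_iff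

lemma isClosed_intertwinerAlgebra (L : Lp ℂ 2 ν →L[ℂ] Lp ℂ 2 κ) :
    IsClosed (intertwinerAlgebra L : Set C(X, ℂ)) :=
  isClosed_eq ((mulOp ν).continuous.const_clm_comp L) ((mulOp κ).continuous.clm_comp_const L)

lemma mem_intertwinerAlgebra_of_mul_eq_one {L : Lp ℂ 2 ν →L[ℂ] Lp ℂ 2 κ} {f g : C(X, ℂ)}
    (hf : f ∈ intertwinerAlgebra L) (hfg : f * g = 1) : g ∈ intertwinerAlgebra L := by
  rw [mem_intertwinerAlgebra] at *
  have hinv {ρ : Measure X} [IsFiniteMeasure ρ] (ξ : Lp ℂ 2 ρ) : mulOp ρ f (mulOp ρ g ξ) = ξ := by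
    rw [← ContinuousLinearMap.comp_apply, ← mulOp_mul, hfg, mulOp_one]; rfl
  have hinv' {ρ : Measure X} [IsFiniteMeasure ρ] (ξ : Lp ℂ 2 ρ) : mulOp ρ g (mulOp ρ f ξ) = ξ := by
    rw [← ContinuousLinearMap.comp_apply, ← mulOp_mul, mul_comm, hfg, mulOp_one]; rfl
  intro ξ
  rw [← hinv' (L (mulOp ν g ξ)), ← hf, hinv]

lemma intertwinerAlgebra_eq_top {ι : Type*} {e : ι → C(X, ℂ)}
    (he : ∀ i, e i * star (e i) = 1) (hsep : ∀ x y, (∀ i, e i x = e i y) → x = y)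
    {L : Lp ℂ 2 ν →L[ℂ] Lp ℂ 2 κ} (hL : ∀ i, e i ∈ intertwinerAlgebra L) :
    intertwinerAlgebra L = ⊤ := by
  let P := StarAlgebra.adjoin ℂ (Set.range e)
  have hPsep : P.SeparatesPoints := fun x y hxy => by
    obtain ⟨i, hi⟩ : ∃ i, e i x ≠ e i y := by
      by_contra! h
      exact hxy (hsep x y h)
    exact ⟨e i, ⟨e i, StarAlgebra.subset_adjoin ℂ _ ⟨i, rfl⟩, rfl⟩, hi⟩
  have hPL : P.toSubalgebra ≤ intertwinerAlgebra L := by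
    refine Algebra.adjoin_le (Set.union_subset (Set.range_subset_iff.2 hL) ?_)
    rintro f ⟨i, hi⟩
    rw [← star_star f, ← hi]
    exact mem_intertwinerAlgebra_of_mul_eq_one (hL i) (he i)
  have hdense := ContinuousMap.starSubalgebra_topologicalClosure_eq_top_of_separatesPoints P hPsep
  refine top_le_iff.1 fun f _ => ?_
  have hf : f ∈ P.topologicalClosure := hdense ▸ StarSubalgebra.mem_top
  exact closure_minimal hPL (isClosed_intertwinerAlgebra L) hf

lemma exists_mul_of_intertwinerAlgebra_eq_top [SecondCountableTopology X] [T4Space X]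
    [ν.WeaklyRegular] {L : Lp ℂ 2 ν →L[ℂ] Lp ℂ 2 ν} (hL : intertwinerAlgebra L = ⊤) :
    ∃ G : Lp ℂ 2 ν, ∀ ξ, L ξ =ᵐ[ν] fun x => G x * ξ x := by
  let i : C(X, ℂ) →L[ℂ] Lp ℂ 2 ν := ContinuousMap.toLp 2 ν ℂ
  let B := (ContinuousLinearMap.mul ℂ ℂ).holderL ν 2 2 1
  have hi (f : C(X, ℂ)) : i f =ᵐ[ν] f := ContinuousMap.coeFn_toLp (𝕜 := ℂ) ν f
  have hB (η ξ : Lp ℂ 2 ν) : B η ξ =ᵐ[ν] fun x => η x * ξ x :=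
    (ContinuousLinearMap.mul ℂ ℂ).coeFn_holder η ξ
  have hLi (f : C(X, ℂ)) : L (i f) = mulOp ν f (L (i 1)) := by
    rw [← mem_intertwinerAlgebra.1 (hL ▸ Algebra.mem_top) (i 1)]
    refine congrArg L (Lp.ext ?_)
    filter_upwards [hi f, hi 1, coeFn_mulOp f (i 1)] with x hf h1 hf1
    rw [hf1, hf, h1, ContinuousMap.one_apply, mul_one]
  have heq : (fun ξ => B (L ξ) (i 1)) = B (L (i 1)) := by
    have hdense := ContinuousMap.toLp_denseRange (p := 2) ℂ ν ℂ ENNReal.ofNat_ne_top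
    refine hdense.equalizer (by fun_prop) (by fun_prop) (funext fun f => Lp.ext ?_)
    change B (L (i f)) (i 1) =ᵐ[ν] B (L (i 1)) (i f)
    filter_upwards [hB (L (i f)) (i 1), hB (L (i 1)) (i f), hi f, hi 1,
      coeFn_mulOp f (L (i 1))] with x hl hr hf h1 hf1
    rw [hl, hr, hLi, hf1, hf, h1, ContinuousMap.one_apply, mul_one, mul_comm]
  refine ⟨L (i 1), fun ξ => ?_⟩
  filter_upwards [hB (L ξ) (i 1), hB (L (i 1)) ξ, hi 1] with x hl hr h1
  rw [← hr, ← congrFun heq ξ, hl, h1, ContinuousMap.one_apply, mul_one]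

lemma integral_withDensity_enorm_sq (f : C(X, ℂ)) (ξ : Lp ℂ 2 ν) :
    ∫ x, f x ∂(ν.withDensity fun x => ‖ξ x‖ₑ ^ 2) = inner ℂ ξ (mulOp ν f ξ) := by
  rw [L2.inner_def, integral_withDensity_eq_integral_toReal_smul
    ((Lp.stronglyMeasurable ξ).enorm.pow_const 2)
    (ae_of_all _ fun x => ENNReal.pow_lt_top enorm_lt_top)]
  refine integral_congr_ae ?_
  filter_upwards [coeFn_mulOp f ξ] with x hx
  rw [hx, RCLike.inner_apply, mul_assoc, RCLike.mul_conj]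
  simp [mul_comm]

lemma withDensity_enorm_sq_eq_of_intertwinerAlgebra_eq_top [HasOuterApproxClosed X]
    {V : Lp ℂ 2 ν →ₗᵢ[ℂ] Lp ℂ 2 κ} (hV : intertwinerAlgebra V.toContinuousLinearMap = ⊤)
    (ξ : Lp ℂ 2 ν) :
    (ν.withDensity fun x => ‖ξ x‖ₑ ^ 2) = κ.withDensity fun x => ‖V ξ x‖ₑ ^ 2 := by
  have (ρ : Measure X) (η : Lp ℂ 2 ρ) : IsFiniteMeasure (ρ.withDensity fun x => ‖η x‖ₑ ^ 2) :=
    isFiniteMeasure_withDensity (lintegral_enorm_sq η ▸ ENNReal.pow_ne_top enorm_ne_top)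
  refine ext_of_forall_integral_eq_of_IsFiniteMeasure fun f => ?_
  let g : C(X, ℂ) := ⟨fun x => f x, by fun_prop⟩
  have hg : V (mulOp ν g ξ) = mulOp κ g (V ξ) :=
    mem_intertwinerAlgebra.1 (hV ▸ Algebra.mem_top) ξ
  have hint : ∫ x, g x ∂(ν.withDensity fun x => ‖ξ x‖ₑ ^ 2) =
      ∫ x, g x ∂(κ.withDensity fun x => ‖V ξ x‖ₑ ^ 2) := by
    rw [integral_withDensity_enorm_sq, integral_withDensity_enorm_sq, ← hg, V.inner_map_map]
  simpa only [g, ContinuousMap.coe_mk, integral_complex_ofReal, Complex.ofReal_inj] using hint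

lemma absolutelyContinuous_of_intertwinerAlgebra_eq_top [HasOuterApproxClosed X]
    {V : Lp ℂ 2 ν →ₗᵢ[ℂ] Lp ℂ 2 κ} (hV : intertwinerAlgebra V.toContinuousLinearMap = ⊤) :
    ν ≪ κ := by
  have hone : (fun x => ‖(Lp.const 2 ν (1 : ℂ)) x‖ₑ ^ 2) =ᵐ[ν] 1 := by
    filter_upwards [Lp.coeFn_const 2 ν (1 : ℂ)] with x hx
    rw [hx]
    simp
  rw [← withDensity_one (μ := ν), ← withDensity_congr_ae hone,
    withDensity_enorm_sq_eq_of_intertwinerAlgebra_eq_top hV]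
  exact withDensity_absolutelyContinuous _ _

variable {S : X ≃ᵐ X} {w : X → ℂ}

lemma IsWeightedComp.apply_mulOp {U : Lp ℂ 2 ν →L[ℂ] Lp ℂ 2 ν} (hU : IsWeightedComp S w U)
    (h : HasJacobian S (fun x => ‖w x‖₊ ^ 2) ν) (hw : Measurable w) {f g : C(X, ℂ)}
    (hfg : ∀ x, f (S x) = g x) (ξ : Lp ℂ 2 ν) : U (mulOp ν f ξ) = mulOp ν g (U ξ) := by
  refine Lp.ext ?_
  filter_upwards [hU (mulOp ν f ξ), coeFn_mulOp g (U ξ), hU ξ,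
    h.ae_comp_of_ne_zero (hw.nnnorm.pow_const 2) (coeFn_mulOp f ξ)] with x hl hr hUξ hfξ
  rw [hl, hr, hUξ]
  by_cases hx : w x = 0
  · simp [hx]
  · rw [hfξ (by simpa using hx), hfg, mul_left_comm]

lemma mem_intertwinerAlgebra_of_isWeightedComp {U₁ : Lp ℂ 2 ν →L[ℂ] Lp ℂ 2 ν}
    {U₂ : Lp ℂ 2 κ →L[ℂ] Lp ℂ 2 κ} (hU₁ : IsWeightedComp S w U₁) (hU₂ : IsWeightedComp S w U₂)
    (hν : HasJacobian S (fun x => ‖w x‖₊ ^ 2) ν) (hκ : HasJacobian S (fun x => ‖w x‖₊ ^ 2) κ)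
    (hw : Measurable w) (hinj : Function.Injective U₂) {L : Lp ℂ 2 ν →L[ℂ] Lp ℂ 2 κ}
    (hL : ∀ ξ, L (U₁ ξ) = U₂ (L ξ)) {f g : C(X, ℂ)} (hfg : ∀ x, f (S x) = g x)
    (hg : g ∈ intertwinerAlgebra L) : f ∈ intertwinerAlgebra L := by
  rw [mem_intertwinerAlgebra] at *
  intro ξ
  apply hinj
  rw [← hL, hU₁.apply_mulOp hν hw hfg, hg, hL, hU₂.apply_mulOp hκ hw hfg]

lemma IsInvariantFactor.exists_mul_comp_of_commute [SecondCountableTopology X] [T4Space X]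
    [ν.WeaklyRegular] {A : Type*} [MeasurableSpace A] {p : X → A}
    (hp : IsInvariantFactor S ν p) {U L : Lp ℂ 2 ν →L[ℂ] Lp ℂ 2 ν} (hU : IsWeightedComp S w U)
    (hS : Measure.QuasiMeasurePreserving S ν ν) (hw0 : ∀ᵐ x ∂ν, w x ≠ 0) (hUL : Commute L U)
    (hL : intertwinerAlgebra L = ⊤) :
    ∃ g : A → ℂ, Measurable g ∧ (∃ C : ℝ, ∀ a, ‖g a‖ ≤ C) ∧
      ∀ ξ, L ξ =ᵐ[ν] fun x => g (p x) * ξ x := by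
  obtain ⟨G, hG⟩ := exists_mul_of_intertwinerAlgebra_eq_top hL
  obtain ⟨g, hg, hgC, hGg⟩ := hp.exists_bounded_ae_eq_comp (Lp.memLp G)
    (hU.comp_ae_eq_of_commute hS hw0 hUL hG) (norm_nonneg L)
    (ae_norm_le_opNorm_of_mul (Lp.aestronglyMeasurable G) hG)
  refine ⟨g, hg, ⟨‖L‖, hgC⟩, fun ξ => ?_⟩
  filter_upwards [hG ξ, hGg] with x hx hgx
  rw [hx, hgx, Function.comp_apply]

end MultiplicationOperators

section Graph

variable {X A : Type*} [MeasurableSpace X] [MeasurableSpace A] [MeasurableEq A] {m : Measure X}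
  {p : X → A}

lemma measurableEmbedding_prodMk_self (hp : Measurable p) :
    MeasurableEmbedding fun x => (p x, x) := by
  refine .of_measurable_inverse (hp.prodMk measurable_id) ?_ measurable_snd fun _ => rfl
  have hrange : Set.range (fun x => (p x, x)) = {q | p q.2 = q.1} := by
    ext ⟨a, x⟩
    simp
  rw [hrange]
  exact measurableSet_eq_fun (hp.comp measurable_snd) measurable_fst

/-- The unitary from `L²(m)` onto `L²` of the image of `m` on the graph of `p`, given by
`ξ ↦ ξ ∘ Prod.snd`. -/
def graphLp (hp : Measurable p) : Lp ℂ 2 m ≃ₗᵢ[ℂ] Lp ℂ 2 (m.map fun x => (p x, x)) :=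
  have hj := measurableEmbedding_prodMk_self hp
  have hsnd : MeasurePreserving Prod.snd (m.map fun x => (p x, x)) m :=
    ⟨measurable_snd, (Measure.map_map measurable_snd hj.measurable).trans Measure.map_id⟩
  .ofSurjective (Lp.compMeasurePreservingₗᵢ ℂ Prod.snd hsnd) fun ξ => by
    have hξ := Lp.coeFn_compMeasurePreserving ξ (hj.measurable.measurePreserving m)
    refine ⟨Lp.compMeasurePreserving _ (hj.measurable.measurePreserving m) ξ, Lp.ext ?_⟩
    refine (Lp.coeFn_compMeasurePreserving _ hsnd).trans (hj.ae_map_iff.2 ?_)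
    exact hξ

lemma coeFn_graphLp (hp : Measurable p) (ξ : Lp ℂ 2 m) :
    (fun x => graphLp hp ξ (p x, x)) =ᵐ[m] ξ :=
  (measurableEmbedding_prodMk_self hp).ae_map_iff.1 (Lp.coeFn_compMeasurePreserving ξ _)

lemma IsWeightedComp.graphLp_ae_eq {S : X → X} {w : X → ℂ} {U : Lp ℂ 2 m →L[ℂ] Lp ℂ 2 m}
    (hU : IsWeightedComp S w U) (hS : Measure.QuasiMeasurePreserving S m m) (hp : Measurable p)
    (hpS : p ∘ S = p) (ξ : Lp ℂ 2 m) :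
    graphLp hp (U ξ) =ᵐ[m.map fun x => (p x, x)] fun q => w q.2 * graphLp hp ξ (q.1, S q.2) := by
  refine (measurableEmbedding_prodMk_self hp).ae_map_iff.2 ?_
  filter_upwards [coeFn_graphLp hp (U ξ), hU ξ, hS.ae_eq_comp (coeFn_graphLp hp ξ)] with x hl hr hξ
  have hpx : p (S x) = p x := congrFun hpS x
  simp only [Function.comp_apply, hpx] at hξ
  rw [hl, hr, hξ]

lemma graphLp_mul_fst_iff (hp : Measurable p) {g : A → ℂ} {ξ η : Lp ℂ 2 m} :
    (graphLp hp η =ᵐ[m.map fun x => (p x, x)] fun q => g q.1 * graphLp hp ξ q) ↔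
      η =ᵐ[m] fun x => g (p x) * ξ x := by
  refine (measurableEmbedding_prodMk_self hp).ae_map_iff.trans ?_
  refine eventually_congr ?_
  filter_upwards [coeFn_graphLp hp η, coeFn_graphLp hp ξ] with x hη hξ
  rw [hη, hξ]

end Graph

namespace Solenoid

variable {N : ℕ} {m₀ : Circle → ℂ} {m ν κ : Measure (Solenoid N)}

lemma isClosed_solenoidGroup (N : ℕ) : IsClosed (solenoidGroup N : Set (ℤ → Circle)) := by
  have hset : (solenoidGroup N : Set (ℤ → Circle)) = ⋂ n : ℤ, {z | z (n + 1) ^ N = z n} := by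
    ext z
    rw [Set.mem_iInter]
    rfl
  rw [hset]
  exact isClosed_iInter fun n => isClosed_eq ((continuous_apply _).pow N) (continuous_apply _)

instance : CompactSpace (Solenoid N) :=
  isCompact_iff_compactSpace.1 (isClosed_solenoidGroup N).isCompact

instance : PolishSpace Circle :=
  have : CompleteSpace Circle := inferInstance
  inferInstance

instance : PolishSpace (Solenoid N) := (isClosed_solenoidGroup N).polishSpace

instance : BorelSpace (Solenoid N) := Subtype.borelSpace _

lemma measurable_val (n : ℤ) : Measurable fun z : Solenoid N => z.val n :=
  (measurable_pi_apply n).comp measurable_subtype_coe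

/-- The coordinate `z ↦ z_n`, as a complex-valued continuous function. -/
def coord (N : ℕ) (n : ℤ) : C(Solenoid N, ℂ) :=
  ⟨fun z => (z.val n : ℂ),
    continuous_subtype_val.comp ((continuous_apply n).comp continuous_subtype_val)⟩

lemma coord_mul_star (n : ℤ) : coord N n * star (coord N n) = 1 := by
  ext z
  simpa using! Complex.mul_conj ((z.val n : Circle) : ℂ)

lemma eq_of_coord_eq {x y : Solenoid N} (h : ∀ n : ℕ, coord N n x = coord N n y) : x = y := by
  have hnat (n : ℕ) : x.val n = y.val n := Circle.ext (h n)
  have hneg (n : ℕ) : x.val (-n) = y.val (-n) := by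
    induction n with
    | zero => simpa using hnat 0
    | succ n ih =>
      have hn : -((n + 1 : ℕ) : ℤ) + 1 = -n := by lia
      rw [← x.property, ← y.property, hn, ih]
  refine Subtype.ext (funext fun n => ?_)
  obtain ⟨k, rfl | rfl⟩ := Int.eq_nat_or_neg n
  exacts [hnat k, hneg k]

/-- The shift as a measurable equivalence. -/
def shiftEquiv (N : ℕ) : Solenoid N ≃ᵐ Solenoid N where
  toFun := shift N
  invFun := shiftInv N
  left_inv z := Subtype.ext (funext fun n => congrArg z.val (add_sub_cancel_right n 1))
  right_inv z := Subtype.ext (funext fun n => congrArg z.val (sub_add_cancel n 1))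
  measurable_toFun := (measurable_pi_lambda _ fun n => measurable_val (n - 1)).subtype_mk
  measurable_invFun := (measurable_pi_lambda _ fun n => measurable_val (n + 1)).subtype_mk

lemma coord_add_one_shiftEquiv (n : ℤ) (z : Solenoid N) :
    coord N (n + 1) (shiftEquiv N z) = coord N n z :=
  congrArg (fun k => ((z.val k : Circle) : ℂ)) (add_sub_cancel_right n 1)

lemma shiftErgodic_iff : ShiftErgodic N ν ↔ PreErgodic (shiftEquiv N) ν := by
  have hconst (E : Set (Solenoid N)) :
      ν E = 0 ∨ ν Eᶜ = 0 ↔ Filter.EventuallyConst E (ae ν) := by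
    rw [eventuallyConst_set', ae_eq_empty, ae_eq_univ]
  exact ⟨fun h => ⟨fun E hE hSE => (hconst E).1 (h E hE hSE)⟩,
    fun h E hE hSE => (hconst E).2 (h.aeconst_set hE hSE)⟩

/-- The density `|m₀(z₀)|²` of the shifted measure. -/
def density (N : ℕ) (m₀ : Circle → ℂ) (z : Solenoid N) : ℝ≥0 := ‖m₀ (z.val 0)‖₊ ^ 2

lemma measurable_density (hm₀ : Measurable m₀) : Measurable (density N m₀) :=
  (hm₀.comp (measurable_val 0)).nnnorm.pow_const 2

lemma exists_density_le (hm₀ : ∃ C : ℝ, ∀ z, ‖m₀ z‖ ≤ C) :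
    ∃ C : ℝ≥0, ∀ z, density N m₀ z ≤ C := by
  obtain ⟨C, hC⟩ := hm₀
  have hC' (z : Solenoid N) : ‖m₀ (z.val 0)‖₊ ≤ C.toNNReal := NNReal.le_toNNReal_of_coe_le (hC _)
  exact ⟨C.toNNReal ^ 2, fun z => pow_le_pow_left' (hC' z) 2⟩

lemma density_ne_zero_iff {z : Solenoid N} : density N m₀ z ≠ 0 ↔ m₀ (z.val 0) ≠ 0 := by
  simp [density]

lemma hasJacobian_density_iff : HasJacobian (shiftEquiv N) (density N m₀) ν ↔
    measShift N ν = ν.withDensity fun z => ENNReal.ofReal (‖m₀ (z.val 0)‖ ^ 2) := by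
  have hdens (z : Solenoid N) :
      ENNReal.ofReal (‖m₀ (z.val 0)‖ ^ 2) = (density N m₀ z : ℝ≥0∞) := by
    rw [ENNReal.ofReal_pow (norm_nonneg _), ofReal_norm, density, ENNReal.coe_pow]
    rfl
  simp only [hdens]
  rfl

lemma quasiInvariant_of_hasJacobian (h : HasJacobian (shiftEquiv N) (density N m₀) ν)
    (hm₀ : Measurable m₀) (hne : ∀ᵐ z ∂ν, density N m₀ z ≠ 0) : QuasiInvariant N ν :=
  ⟨h.map_symm_absolutelyContinuous, h.absolutelyContinuous_map_symm (measurable_density hm₀) hne⟩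

variable {U T : unitary (Lp ℂ 2 ν →L[ℂ] Lp ℂ 2 ν)}

lemma isWeightedComp_shiftEquiv (h : IsWaveletRepOn N m₀ ν U T) :
    IsWeightedComp (shiftEquiv N) (fun z => m₀ (z.val 0)) (U : Lp ℂ 2 ν →L[ℂ] Lp ℂ 2 ν) :=
  h.1

lemma isWeightedComp_id (h : IsWaveletRepOn N m₀ ν U T) :
    IsWeightedComp id (coord N 0) (T : Lp ℂ 2 ν →L[ℂ] Lp ℂ 2 ν) :=
  h.2

lemma mulOp_coord_zero [IsFiniteMeasure ν] (h : IsWaveletRepOn N m₀ ν U T) :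
    mulOp ν (coord N 0) = (T : Lp ℂ 2 ν →L[ℂ] Lp ℂ 2 ν) :=
  ContinuousLinearMap.ext fun ξ => Lp.ext ((coeFn_mulOp _ ξ).trans (isWeightedComp_id h ξ).symm)

lemma intertwinerAlgebra_eq_top_of_isWaveletRepOn [IsFiniteMeasure ν] [IsFiniteMeasure κ]
    (hm₀ : Measurable m₀) (hν : HasJacobian (shiftEquiv N) (density N m₀) ν)
    (hκ : HasJacobian (shiftEquiv N) (density N m₀) κ) (hUT : IsWaveletRepOn N m₀ ν U T)
    {U' T' : unitary (Lp ℂ 2 κ →L[ℂ] Lp ℂ 2 κ)} (hUT' : IsWaveletRepOn N m₀ κ U' T')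
    {L : Lp ℂ 2 ν →L[ℂ] Lp ℂ 2 κ}
    (hLU : ∀ ξ, L ((U : Lp ℂ 2 ν →L[ℂ] Lp ℂ 2 ν) ξ) = (U' : Lp ℂ 2 κ →L[ℂ] Lp ℂ 2 κ) (L ξ))
    (hLT : ∀ ξ, L ((T : Lp ℂ 2 ν →L[ℂ] Lp ℂ 2 ν) ξ) = (T' : Lp ℂ 2 κ →L[ℂ] Lp ℂ 2 κ) (L ξ)) :
    intertwinerAlgebra L = ⊤ := by
  refine intertwinerAlgebra_eq_top (e := fun n : ℕ => coord N n)
    (fun n => coord_mul_star n) (fun x y => eq_of_coord_eq) fun n => ?_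
  induction n with
  | zero =>
    rw [mem_intertwinerAlgebra, Nat.cast_zero, mulOp_coord_zero hUT, mulOp_coord_zero hUT']
    exact hLT
  | succ n ih =>
    rw [Nat.cast_succ]
    exact mem_intertwinerAlgebra_of_isWeightedComp (isWeightedComp_shiftEquiv hUT)
      (isWeightedComp_shiftEquiv hUT') hν hκ (hm₀.comp (measurable_val 0))
      (Unitary.linearIsometryEquiv U').injective hLU (coord_add_one_shiftEquiv n) ih

lemma commute_iff_exists_mul_comp [IsFiniteMeasure ν] {A : Type*} [MeasurableSpace A]
    {p : Solenoid N → A} (hm₀ : Measurable m₀)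
    (h : HasJacobian (shiftEquiv N) (density N m₀) ν) (hne : ∀ᵐ z ∂ν, density N m₀ z ≠ 0)
    (hUT : IsWaveletRepOn N m₀ ν U T) (hp : IsInvariantFactor (shiftEquiv N) ν p)
    (L : Lp ℂ 2 ν →L[ℂ] Lp ℂ 2 ν) :
    Commute L (U : Lp ℂ 2 ν →L[ℂ] Lp ℂ 2 ν) ∧ Commute L (T : Lp ℂ 2 ν →L[ℂ] Lp ℂ 2 ν) ↔
      ∃ g : A → ℂ, Measurable g ∧ (∃ C : ℝ, ∀ a, ‖g a‖ ≤ C) ∧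
        ∀ ξ, L ξ =ᵐ[ν] fun z => g (p z) * ξ z := by
  have hS := h.quasiMeasurePreserving (measurable_density hm₀) hne
  constructor
  · rintro ⟨hLU, hLT⟩
    exact hp.exists_mul_comp_of_commute (isWeightedComp_shiftEquiv hUT) hS
      (hne.mono fun _ => density_ne_zero_iff.1) hLU
      (intertwinerAlgebra_eq_top_of_isWaveletRepOn hm₀ h h hUT hUT
        (DFunLike.congr_fun hLU.eq) (DFunLike.congr_fun hLT.eq))
  · rintro ⟨g, -, -, hg⟩
    exact ⟨(isWeightedComp_shiftEquiv hUT).commute_of_mul_comp hS hg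
        (congrArg (g ∘ ·) hp.comp_eq),
      (isWeightedComp_id hUT).commute_of_mul_comp (.id ν) hg rfl⟩

theorem eq_of_intertwining_isWaveletRepOn [IsProbabilityMeasure ν] [IsProbabilityMeasure κ]
    (hm₀ : Measurable m₀) (hν : HasJacobian (shiftEquiv N) (density N m₀) ν)
    (hκ : HasJacobian (shiftEquiv N) (density N m₀) κ) (hne : ∀ᵐ z ∂κ, density N m₀ z ≠ 0)
    (herg : PreErgodic (shiftEquiv N) κ) (hUT : IsWaveletRepOn N m₀ ν U T)
    {U' T' : unitary (Lp ℂ 2 κ →L[ℂ] Lp ℂ 2 κ)} (hUT' : IsWaveletRepOn N m₀ κ U' T')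
    (W : Lp ℂ 2 ν ≃ₗᵢ[ℂ] Lp ℂ 2 κ)
    (hWU : ∀ ξ, W ((U : Lp ℂ 2 ν →L[ℂ] Lp ℂ 2 ν) ξ) = (U' : Lp ℂ 2 κ →L[ℂ] Lp ℂ 2 κ) (W ξ))
    (hWT : ∀ ξ, W ((T : Lp ℂ 2 ν →L[ℂ] Lp ℂ 2 ν) ξ) = (T' : Lp ℂ 2 κ →L[ℂ] Lp ℂ 2 κ) (W ξ)) :
    ν = κ :=
  hκ.eq_of_absolutelyContinuous hν (measurable_density hm₀) hne herg <|
    absolutelyContinuous_of_intertwinerAlgebra_eq_top (V := W.toLinearIsometry) <|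
      intertwinerAlgebra_eq_top_of_isWaveletRepOn hm₀ hν hκ hUT hUT' hWU hWT

/-- The direct integral decomposition of the wavelet representation on `L²(m)` obtained from a
disintegration `κ` of `m` over an invariant factor `p`, with `L²` of the graph of `p` as the model
of the direct integral. -/
def decompOfInvariantFactor [IsFiniteMeasure m] (hm₀ : Measurable m₀)
    (hm₀b : ∃ C : ℝ, ∀ z, ‖m₀ z‖ ≤ C) (h : HasJacobian (shiftEquiv N) (density N m₀) m)
    (hne : ∀ᵐ z ∂m, density N m₀ z ≠ 0) {U T : unitary (Lp ℂ 2 m →L[ℂ] Lp ℂ 2 m)}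
    (hUT : IsWaveletRepOn N m₀ m U T) {B : MeasurableBase} {p : Solenoid N → B.A}
    (hp : IsInvariantFactor (shiftEquiv N) m p) (κ : Kernel B.A (Solenoid N)) [IsMarkovKernel κ]
    (hκ : m.map p ⊗ₘ κ = m.map fun z => (p z, z)) : DirectIntegralDecomp N m₀ m U T B :=
  have hd := measurable_density (N := N) hm₀
  have hS := h.quasiMeasurePreserving hd hne
  have hκjac := (exists_density_le (N := N) hm₀b).elim fun _ hC =>
    h.ae_of_compProd_eq hd hC hp.measurable hp.comp_eq hκ
  have hκne := ae_ae_of_compProd_eq hp.measurable hκ hne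
  have hκerg := (exists_density_le (N := N) hm₀b).elim fun _ hC =>
    h.ae_preErgodic hd hC hne hp hκ
  { μ := m.map p
    sf := inferInstance
    κ := κ
    ρm := m.map fun z => (p z, z)
    κ_meas := fun E hE => κ.measurable_coe hE
    κ_prob := ae_of_all _ fun a => inferInstance
    κ_rn := hκjac.mono fun a => hasJacobian_density_iff.1
    κ_qi := hκjac.mp (hκne.mono fun a hne h => quasiInvariant_of_hasJacobian h hm₀ hne)
    κ_erg := hκerg.mono fun a => shiftErgodic_iff.2
    κ_unique := by
      filter_upwards [hκjac, hκne, hκerg] with a hjac hne herg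
      rintro ν hν hνrn - ⟨Uν, Tν, Ua, Ta, hUTν, hUTa, W, hWU, hWT⟩
      exact eq_of_intertwining_isWaveletRepOn hm₀ (hasJacobian_density_iff.2 hνrn) hjac hne herg
        hUTν hUTa W hWU hWT
    κ_mix := fun E hE => measure_eq_lintegral_of_compProd_eq hp.measurable hκ hE
    ρ_prod := fun E F hE hF => by rw [← hκ, Measure.compProd_apply_prod hE hF]
    Ψ := graphLp hp.measurable
    interU := (isWeightedComp_shiftEquiv hUT).graphLp_ae_eq hS hp.measurable hp.comp_eq
    interT := (isWeightedComp_id hUT).graphLp_ae_eq (.id m) hp.measurable rfl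
    diag := fun L => by
      simpa only [graphLp_mul_fst_iff] using commute_iff_exists_mul_comp hm₀ h hne hUT hp L }

end Solenoid

namespace IsAssociatedMeasure

variable {N : ℕ} {m₀ : Circle → ℂ} {W : Circle → ℝ} {m : Measure (Solenoid N)}

lemma measShift_eq (hm : IsAssociatedMeasure N (fun z => ‖m₀ z‖ ^ 2 / N) m) (hN : N ≠ 0) :
    measShift N m = m.withDensity fun z => ENNReal.ofReal (‖m₀ (z.val 0)‖ ^ 2) := by
  have hN' : (N : ℝ) ≠ 0 := Nat.cast_ne_zero.2 hN
  rw [hm.2.2]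
  simp only [mul_div_cancel₀ _ hN']

lemma ae_ne_zero (hm : IsAssociatedMeasure N W m) (hns : circleMeasure {z | m₀ z = 0} = 0) :
    ∀ᵐ z ∂m, m₀ (z.val 0) ≠ 0 := by
  have hcircle : ∀ᵐ z ∂circleMeasure, m₀ z ≠ 0 := measure_eq_zero_iff_ae_notMem.1 hns
  rw [← hm.2.1] at hcircle
  exact ae_of_ae_map (Solenoid.measurable_val 0).aemeasurable hcircle

end IsAssociatedMeasure

open Solenoid in
theorem statement_12_general (N : ℕ) (m₀ : Circle → ℂ) (hmeas : Measurable m₀)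
    (hbdd : ∃ C : ℝ, ∀ z, ‖m₀ z‖ ≤ C) (m : Measure (Solenoid N)) [IsFiniteMeasure m]
    (hrn : measShift N m = m.withDensity fun z => ENNReal.ofReal (‖m₀ (z.val 0)‖ ^ 2))
    (hne : ∀ᵐ z ∂m, m₀ (z.val 0) ≠ 0) (U T : unitary (Lp ℂ 2 m →L[ℂ] Lp ℂ 2 m))
    (hUT : IsWaveletRepOn N m₀ m U T) :
    ∃ B : MeasurableBase, Nonempty (DirectIntegralDecomp N m₀ m U T B) := by
  have h := hasJacobian_density_iff.2 hrn
  have hne' : ∀ᵐ z ∂m, density N m₀ z ≠ 0 := hne.mono fun _ => density_ne_zero_iff.2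
  obtain ⟨p, hp⟩ := exists_isInvariantFactor
    (h.quasiMeasurePreserving (measurable_density hmeas) hne')
  have hκ : m.map p ⊗ₘ condDistrib id p m = m.map fun z => (p z, z) :=
    compProd_map_condDistrib (X := p) aemeasurable_id
  exact ⟨⟨ℕ → ℝ⟩, ⟨decompOfInvariantFactor hmeas hbdd h hne' hUT hp _ hκ⟩⟩

end

open MeasureTheory Real Complex Filter Finset in
/-- Theorem 3.6. Let `m₀ ∈ L^∞(𝕋)` be non-singular with
`R_{m₀}1 = 1` and let `(L²(m), U, T, φ)` be the associated wavelet
representation of `BS(1,N)`.  Then there are a standard measure space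
`(A, 𝓜, μ)`, a measurable field of ergodic quasi-invariant probability measures
`ν_a` on the solenoid with `d(ν_a∘S)/dν_a = |m₀|²` (each unique with these
properties and with `π_a ≅ π_{ν_a,θ}`, `θ = m₀/|m₀|`), and a unitary
`Ψ : L²(m) → ∫^⊕ 𝓗_a dμ(a)` intertwining the representation with the direct
integral of the irreducible fiber representations and carrying the commutant to
the diagonal operators; moreover `∫ f dm = ∫_A ∫ f dν_a dμ(a)`. -/
theorem statement_12 (N : ℕ) (hN : 2 ≤ N)
    (m₀ : Circle → ℂ) (hmeas : Measurable m₀) (hbdd : ∃ C : ℝ, ∀ z, ‖m₀ z‖ ≤ C)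
    (hns : circleMeasure {z | m₀ z = 0} = 0) (hqmf : QMF N m₀)
    (m : Measure (Solenoid N))
    (hm : IsAssociatedMeasure N (fun z => ‖m₀ z‖ ^ 2 / N) m)
    (U T : unitary (Lp ℂ 2 m →L[ℂ] Lp ℂ 2 m))
    (hUT : IsWaveletRepOn N m₀ m U T) :
    ∃ B : MeasurableBase, Nonempty (DirectIntegralDecomp N m₀ m U T B) := by
  have := hm.1
  exact statement_12_general N m₀ hmeas hbdd m (hm.measShift_eq (by lia)) (hm.ae_ne_zero hns)
    U T hUT

end
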